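/- arXiv:2211.16819 — 10 statements merged into one kernel-verified Lean document; each statement's English description precedes it below -/
import Mathlib

section
/- Let n ≥ 2, 1 ≤ d ≤ n−1 and 1 ≤ i ≤ d. Then ℓ(w_{i+1}^{(d)}) = ℓ(w_i^{(d)}) − 1; in other words, the sequence w_1^{(d)}, …, w_{d+1}^{(d)} is a path in which the length drops by exactly one at each step. -/
/-!
Right multiplication by a transposition of the positions `a < b` interchanges the values at these
positions. If those values are consecutive integers, with the larger one at `a`, every other value
compares with both in the same way, so exactly one inversion is lost, namely `(a, b)` itself
(`plen_mul_swap_add_one`).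

Passing from `w_i` to `w_{i+1}` is right multiplication by `(n-d, n-i+1)`. The permutation `w_i`
takes the value `d + 2 - i` at `n - d` and still takes the value `d + 1 - i` at `n - i + 1`,
a position none of the earlier transpositions moves (`IsLambda.swapProd_apply_pivot`,
`swapProd_apply_of_le`). These values are consecutive.
-/

/-- The length (number of inversions) of a permutation of `{1,…,n}`, realized as a
permutation of `ℕ` fixing the complement of `{1,…,n}`. -/
def plen (n : ℕ) (w : Equiv.Perm ℕ) : ℕ :=
  ((Finset.Icc 1 n ×ˢ Finset.Icc 1 n).filter
    (fun p => p.1 < p.2 ∧ w p.2 < w p.1)).card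

/-- `Λ_d` is the permutation of `{1,…,n}` with `Λ_d(c) = n+1−c` for `1 ≤ c ≤ n−d`
and `Λ_d(n−d+i) = i` for `1 ≤ i ≤ d`. -/
def IsLambda (n d : ℕ) (Λ : Equiv.Perm ℕ) : Prop :=
  (∀ c, 1 ≤ c → c ≤ n - d → Λ c = n + 1 - c) ∧
  (∀ i, 1 ≤ i → i ≤ d → Λ (n - d + i) = i) ∧
  (∀ x, x ∉ Finset.Icc 1 n → Λ x = x)

/-- `w_i^{(d)} = Λ_d ∘ (n−d, n) ∘ (n−d, n−1) ∘ ⋯ ∘ (n−d, n−i+2)`. -/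
def wseq (n d : ℕ) (Λ : Equiv.Perm ℕ) (i : ℕ) : Equiv.Perm ℕ :=
  Λ * ((List.range (i - 1)).map (fun j => Equiv.swap (n - d) (n - j))).prod

/-- The product `(n-d, n) ∘ (n-d, n-1) ∘ ⋯ ∘ (n-d, n-k+1)` of `k` transpositions, so that `w_i` is
`Λ_d` composed with this product for `k = i - 1`. -/
def swapProd (n d k : ℕ) : Equiv.Perm ℕ :=
  ((List.range k).map (fun j => Equiv.swap (n - d) (n - j))).prod

theorem swapProd_succ (n d k : ℕ) :
    swapProd n d (k + 1) = swapProd n d k * Equiv.swap (n - d) (n - k) := by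
  simp [swapProd, List.range_succ]

/-- Interchanging a value with its predecessor, when the larger stands to the left, removes
exactly one inversion. -/
theorem plen_mul_swap_add_one {n a b : ℕ} (w : Equiv.Perm ℕ) (ha : 1 ≤ a) (hab : a < b)
    (hb : b ≤ n) (hw : w a = w b + 1) :
    plen n (w * Equiv.swap a b) + 1 = plen n w := by
  have key : ((Finset.Icc 1 n ×ˢ Finset.Icc 1 n).filter
      (fun p => p.1 < p.2 ∧ (w * Equiv.swap a b) p.2 < (w * Equiv.swap a b) p.1)) =
      ((Finset.Icc 1 n ×ˢ Finset.Icc 1 n).filter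
        (fun p => p.1 < p.2 ∧ w p.2 < w p.1)).erase (a, b) := by
    ext ⟨x, y⟩
    simp only [Finset.mem_filter, Finset.mem_erase, Finset.mem_product, Finset.mem_Icc, ne_eq,
      Prod.mk.injEq]
    simp only [Equiv.Perm.mul_apply, Equiv.swap_apply_def]
    -- By injectivity, a value equal to `w a` or `w b` can only occur at that position.
    have hxa : w x = w a ↔ x = a := w.injective.eq_iff
    have hxb : w x = w b ↔ x = b := w.injective.eq_iff
    have hya : w y = w a ↔ y = a := w.injective.eq_iff
    have hyb : w y = w b ↔ y = b := w.injective.eq_iff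
    split_ifs <;> subst_vars <;> omega
  unfold plen
  rw [key]
  apply Finset.card_erase_add_one
  simp only [Finset.mem_filter, Finset.mem_product, Finset.mem_Icc]
  omega

theorem swapProd_apply_of_le {n d k j : ℕ} (hd : d ≤ n) (hkj : k ≤ j) (hj : j < d) :
    swapProd n d k (n - j) = n - j := by
  induction k with
  | zero => simp [swapProd]
  | succ k ih =>
    rw [swapProd_succ, Equiv.Perm.mul_apply,
      Equiv.swap_apply_of_ne_of_ne (by omega) (by omega), ih (by omega)]

theorem IsLambda.apply_sub {n d k : ℕ} {Λ : Equiv.Perm ℕ} (hΛ : IsLambda n d Λ)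
    (hd : d ≤ n) (hk : k < d) : Λ (n - k) = d - k := by
  have h := hΛ.2.1 (d - k) (by omega) (by omega)
  rwa [show n - d + (d - k) = n - k by omega] at h

/-- The value at the pivot position `n - d` after `k` transpositions. -/
theorem IsLambda.swapProd_apply_pivot {n d k : ℕ} {Λ : Equiv.Perm ℕ} (hΛ : IsLambda n d Λ)
    (hd : d < n) (hk : k ≤ d) : Λ (swapProd n d k (n - d)) = d + 1 - k := by
  cases k with
  | zero =>
    have h := hΛ.1 (n - d) (by omega) le_rfl
    simp only [swapProd, List.range_zero, List.map_nil, List.prod_nil, Equiv.Perm.one_apply]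
    omega
  | succ k =>
    rw [swapProd_succ, Equiv.Perm.mul_apply, Equiv.swap_apply_left,
      swapProd_apply_of_le hd.le le_rfl hk, hΛ.apply_sub hd.le hk]
    omega

/-- At each step of the path `w_1^{(d)}, …, w_{d+1}^{(d)}` the length drops by
exactly one: `ℓ(w_{i+1}^{(d)}) = ℓ(w_i^{(d)}) − 1`. -/
theorem plen_wseq_succ
    (n d i : ℕ) (hn : 2 ≤ n) (hd1 : 1 ≤ d) (hd2 : d ≤ n - 1)
    (hi1 : 1 ≤ i) (hi2 : i ≤ d)
    (Λd : Equiv.Perm ℕ) (hΛd : IsLambda n d Λd) :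
    plen n (wseq n d Λd (i + 1)) + 1 = plen n (wseq n d Λd i) := by
  obtain ⟨k, rfl⟩ : ∃ k, i = k + 1 := ⟨i - 1, by omega⟩
  have hstep : wseq n d Λd (k + 1 + 1) = wseq n d Λd (k + 1) * Equiv.swap (n - d) (n - k) := by
    change Λd * swapProd n d (k + 1) = Λd * swapProd n d k * Equiv.swap (n - d) (n - k)
    rw [swapProd_succ, mul_assoc]
  rw [hstep]
  apply plen_mul_swap_add_one _ (by omega) (by omega) (by omega)
  change Λd (swapProd n d k (n - d)) = Λd (swapProd n d k (n - k)) + 1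
  rw [hΛd.swapProd_apply_pivot (by omega) (by omega),
    swapProd_apply_of_le (by omega) le_rfl hi2, hΛd.apply_sub (by omega) hi2]
  omega
end

section
/- Let n ≥ 2, 1 ≤ d ≤ n−1 and 1 ≤ i ≤ d+1. Then the permutation w = w_i^{(d)} has no V-shape: there are no indices a < b < c with w(a) < w(b) and w(c) < w(b). -/
/-- The product of the transpositions `(n-d, n), …, (n-d, n-k+1)` is the cycle
`n-d ↦ n-k+1 ↦ n-k+2 ↦ ⋯ ↦ n ↦ n-d` (the identity when `k = 0`). -/
lemma prod_swap_apply (n d k : ℕ) (hdn : d < n) (hk : k ≤ d) (x : ℕ) :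
    ((List.range k).map (fun j => Equiv.swap (n - d) (n - j))).prod x =
      if k = 0 then x
      else if x = n - d then n - k + 1
      else if x = n then n - d
      else if n - k < x ∧ x < n then x + 1
      else x := by
  induction k generalizing x with
  | zero => simp
  | succ k ih =>
    rw [List.range_succ, List.map_append, List.prod_append, List.map_singleton,
      List.prod_singleton, Equiv.Perm.mul_apply, if_neg k.succ_ne_zero]
    rcases eq_or_ne x (n - d) with rfl | h1
    · rw [Equiv.swap_apply_left, ih (by omega)]
      split_ifs <;> omega
    · rcases eq_or_ne x (n - k) with rfl | h2
      · rw [Equiv.swap_apply_right, ih (by omega)]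
        split_ifs <;> omega
      · rw [Equiv.swap_apply_of_ne_of_ne h1 h2, ih (by omega)]
        split_ifs <;> omega

/-- The one-line notation of `w_{k+1}^{(d)}`. -/
lemma wseq_apply (n d k : ℕ) (hd : 1 ≤ d) (hdn : d < n) (hk : k ≤ d)
    (Λd : Equiv.Perm ℕ) (hΛd : IsLambda n d Λd) (x : ℕ) (hx1 : 1 ≤ x) (hxn : x ≤ n) :
    wseq n d Λd (k + 1) x =
      if x < n - d then n + 1 - x
      else if x = n - d then d - k + 1
      else if x ≤ n - k then x - (n - d)
      else x - (n - d) + 1 := by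
  obtain ⟨hlow, hhigh, -⟩ := hΛd
  have hhigh' : ∀ y, n - d < y → y ≤ n → Λd y = y - (n - d) := by
    intro y h1 h2
    have h := hhigh (y - (n - d)) (by omega) (by omega)
    rwa [Nat.add_sub_cancel' h1.le] at h
  rw [wseq, Equiv.Perm.mul_apply, Nat.add_sub_cancel, prod_swap_apply n d k hdn hk]
  have key : ∀ y, 1 ≤ y → y ≤ n → Λd y = if y ≤ n - d then n + 1 - y else y - (n - d) := by
    intro y h1 h2
    split_ifs with h
    · exact hlow y h1 h
    · exact hhigh' y (by omega) h2
  rw [key _ (by split_ifs <;> omega) (by split_ifs <;> omega)]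
  split_ifs <;> omega

/-- The permutation `w = w_i^{(d)}` has no V-shape: there are no indices
`a < b < c` in `{1,…,n}` with `w(a) < w(b)` and `w(c) < w(b)`. -/
theorem wseq_no_V_shape
    (n d i : ℕ) (hn : 2 ≤ n) (hd1 : 1 ≤ d) (hd2 : d ≤ n - 1)
    (hi1 : 1 ≤ i) (hi2 : i ≤ d + 1)
    (Λd : Equiv.Perm ℕ) (hΛd : IsLambda n d Λd) :
    ¬ ∃ a b c, 1 ≤ a ∧ a < b ∧ b < c ∧ c ≤ n ∧
      (wseq n d Λd i) a < (wseq n d Λd i) b ∧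
      (wseq n d Λd i) c < (wseq n d Λd i) b := by
  rintro ⟨a, b, c, ha, hab, hbc, hc, h1, h2⟩
  obtain ⟨k, rfl⟩ : ∃ k, i = k + 1 := ⟨i - 1, by omega⟩
  have W := wseq_apply n d k hd1 (by omega) (by omega) Λd hΛd
  -- `w(a) < w(b)` is impossible on the decreasing part, `w(c) < w(b)` on the increasing part
  rcases le_or_gt b (n - d) with hb | hb
  · rw [W a ha (by omega), W b (by omega) (by omega)] at h1
    split_ifs at h1 <;> omega
  · rw [W b (by omega) (by omega), W c (by omega) hc] at h2
    split_ifs at h2 <;> omega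
end

section
/- Let n ≥ 2 and 1 ≤ i ≤ n, and set w = w_i^{(n−1)}. Then E_w = {(1, j) : 2 ≤ j ≤ n−i+1}. -/
/-- `E_w`: the set of pairs `(i,j)` with `1 ≤ i < j ≤ n` such that
`ℓ(w∘(i j)) = ℓ(w) − 1`. -/
def Eset (n : ℕ) (w : Equiv.Perm ℕ) : Set (ℕ × ℕ) :=
  {p : ℕ × ℕ | 1 ≤ p.1 ∧ p.1 < p.2 ∧ p.2 ≤ n ∧
    plen n (w * Equiv.swap p.1 p.2) + 1 = plen n w}

/-- `w` agrees on `{1,…,n}` with the one-line notation `m, 1, 2, …, m - 1, m + 1, …, n`. -/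
def IsCyc (n m : ℕ) (w : Equiv.Perm ℕ) : Prop :=
  ∀ x, 1 ≤ x → x ≤ n → w x = if x = 1 then m else if x ≤ m then x - 1 else x

lemma wseq_apply_s8 (n : ℕ) (hn : 2 ≤ n) (Λ : Equiv.Perm ℕ) (hΛ : IsLambda n (n - 1) Λ)
    (k : ℕ) (hk : k + 1 ≤ n) : IsCyc n (n - k) (wseq n (n - 1) Λ (k + 1)) := by
  have h1 : n - (n - 1) = 1 := by omega
  induction k with
  | zero =>
    obtain ⟨hA, hB, -⟩ := hΛ
    intro x hx1 hxn
    rw [h1] at hA hB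
    simp only [wseq, Nat.add_sub_cancel, List.range_zero, List.map_nil, List.prod_nil, mul_one]
    split_ifs with h h'
    · rw [hA x hx1 (by omega)]; omega
    · have := hB (x - 1) (by omega) (by omega)
      rwa [show 1 + (x - 1) = x by omega] at this
    · omega
  | succ k ih =>
    have ih := ih (by omega)
    have hs : wseq n (n - 1) Λ (k + 1 + 1)
        = wseq n (n - 1) Λ (k + 1) * Equiv.swap 1 (n - k) := by
      simp [wseq, h1, List.range_succ, mul_assoc]
    intro x hx1 hxn
    rw [hs, Equiv.Perm.mul_apply]
    rcases eq_or_ne x 1 with rfl | hx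
    · rw [Equiv.swap_apply_left, ih _ (by omega) (by omega)]
      split_ifs <;> omega
    rcases eq_or_ne x (n - k) with rfl | hx'
    · rw [Equiv.swap_apply_right, ih _ (by omega) (by omega)]
      split_ifs <;> omega
    · rw [Equiv.swap_apply_of_ne_of_ne hx hx', ih _ hx1 hxn]
      split_ifs <;> omega

lemma plen_cyc {n m : ℕ} {w : Equiv.Perm ℕ} (hmn : m ≤ n) (hw : IsCyc n m w) :
    plen n w = m - 1 := by
  have : ((Finset.Icc 1 n ×ˢ Finset.Icc 1 n).filter
      (fun p => p.1 < p.2 ∧ w p.2 < w p.1)) = (Finset.Icc 2 m).image (fun c => (1, c)) := by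
    ext ⟨x, y⟩
    simp only [Finset.mem_filter, Finset.mem_product, Finset.mem_Icc, Finset.mem_image,
      Prod.mk.injEq]
    constructor
    · rintro ⟨⟨⟨hx1, hxn⟩, hy1, hyn⟩, hxy, h⟩
      rw [hw x hx1 hxn, hw y hy1 hyn] at h
      refine ⟨y, ?_, ?_, rfl⟩ <;> split_ifs at h <;> omega
    · rintro ⟨c, hc, rfl, rfl⟩
      rw [hw 1 (by omega) (by omega), hw c (by omega) (by omega)]
      split_ifs <;> omega
  rw [plen, this, Finset.card_image_of_injective _ (fun a b h => by simpa using h), Nat.card_Icc]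
  omega

lemma plen_cyc_mul_swap {n m b : ℕ} {w : Equiv.Perm ℕ} (hmn : m ≤ n) (hw : IsCyc n m w)
    (hb : 2 ≤ b) (hbm : b ≤ m) : plen n (w * Equiv.swap 1 b) = m - 2 := by
  have hv : ∀ x, 1 ≤ x → x ≤ n → (w * Equiv.swap 1 b) x =
      if x = 1 then b - 1 else if x = b then m else if x ≤ m then x - 1 else x := by
    intro x hx1 hxn
    rw [Equiv.Perm.mul_apply, Equiv.swap_apply_def]
    split_ifs <;> rw [hw _ (by omega) (by omega)] <;> split_ifs <;> omega
  have : ((Finset.Icc 1 n ×ˢ Finset.Icc 1 n).filter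
      (fun p => p.1 < p.2 ∧ (w * Equiv.swap 1 b) p.2 < (w * Equiv.swap 1 b) p.1))
      = ((Finset.Icc 2 m).erase b).image (fun c => (if c < b then 1 else b, c)) := by
    ext ⟨x, y⟩
    simp only [Finset.mem_filter, Finset.mem_product, Finset.mem_Icc, Finset.mem_image,
      Prod.mk.injEq, Finset.mem_erase]
    constructor
    · rintro ⟨⟨⟨hx1, hxn⟩, hy1, hyn⟩, hxy, h⟩
      rw [hv x hx1 hxn, hv y hy1 hyn] at h
      refine ⟨y, ?_, ?_, rfl⟩ <;> split_ifs at h ⊢ <;> omega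
    · rintro ⟨c, hc, rfl, rfl⟩
      rw [hv c (by omega) (by omega), hv _ (by split_ifs <;> omega) (by split_ifs <;> omega)]
      split_ifs <;> omega
  rw [plen, this, Finset.card_image_of_injective _ (fun a b h => (Prod.mk.inj h).2),
    Finset.card_erase_of_mem (by simp; omega), Nat.card_Icc]
  omega

lemma le_plen_cyc_mul_swap {n m a b : ℕ} {w : Equiv.Perm ℕ} (hmn : m ≤ n)
    (hw : IsCyc n m w) (ha : 1 ≤ a) (hab : a < b) (hbn : b ≤ n) (h : a = 1 → m < b) :
    m - 1 ≤ plen n (w * Equiv.swap a b) := by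
  have hinj : Function.Injective (fun c => ((1 : ℕ), Equiv.swap a b c)) := fun x y hxy =>
    (Equiv.swap a b).injective (Prod.mk.inj hxy).2
  have hcard : m - 1 = ((Finset.Icc 2 m).image (fun c => ((1 : ℕ), Equiv.swap a b c))).card := by
    rw [Finset.card_image_of_injective _ hinj, Nat.card_Icc]
    omega
  rw [hcard, plen]
  refine Finset.card_le_card fun p hp => ?_
  obtain ⟨c, hc, rfl⟩ := Finset.mem_image.1 hp
  rw [Finset.mem_Icc] at hc
  have hsc : 2 ≤ Equiv.swap a b c ∧ Equiv.swap a b c ≤ n := by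
    rw [Equiv.swap_apply_def]
    split_ifs <;> omega
  rw [Finset.mem_filter, Finset.mem_product, Finset.mem_Icc, Finset.mem_Icc]
  refine ⟨by dsimp only; omega, by dsimp only; omega, ?_⟩
  simp only [Equiv.Perm.mul_apply, Equiv.swap_apply_self]
  rw [hw c (by omega) (by omega), Equiv.swap_apply_def a b 1]
  split_ifs <;> first | omega | (rw [hw _ (by omega) (by omega)]; split_ifs <;> omega)

/-- For `d = n−1` and `1 ≤ i ≤ n`, the set `E_w` for `w = w_i^{(n−1)}` is
`{(1, j) : 2 ≤ j ≤ n−i+1}`. -/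
theorem Eset_wseq_last_col
    (n i : ℕ) (hn : 2 ≤ n) (hi1 : 1 ≤ i) (hi2 : i ≤ n)
    (Λ : Equiv.Perm ℕ) (hΛ : IsLambda n (n - 1) Λ) :
    Eset n (wseq n (n - 1) Λ i) =
      {p : ℕ × ℕ | ∃ j, 2 ≤ j ∧ j ≤ n - i + 1 ∧ p = (1, j)} := by
  obtain ⟨k, rfl⟩ : ∃ k, i = k + 1 := ⟨i - 1, by omega⟩
  have hw := wseq_apply_s8 n hn Λ hΛ k hi2
  have hmn : n - k ≤ n := Nat.sub_le _ _
  ext ⟨a, b⟩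
  simp only [Eset, Set.mem_ofPred_eq, plen_cyc hmn hw, Prod.mk.injEq]
  constructor
  · rintro ⟨ha, hab, hbn, h⟩
    by_cases hc : a = 1 → n - k < b
    · have := le_plen_cyc_mul_swap hmn hw ha hab hbn hc
      omega
    · push Not at hc
      exact ⟨b, by omega, by omega, hc.1, rfl⟩
  · rintro ⟨j, hj2, hj, rfl, rfl⟩
    rw [plen_cyc_mul_swap hmn hw hj2 (by omega)]
    omega
end

section
/- Let n ≥ 1, let (m_1,…,m_k) be a composition of n, and let w = [m_1,…,m_k] be the associated block-cycle permutation. Then E_w = {(M_{t−1}+1, M_{t−1}+j) : 1 ≤ t ≤ k, 2 ≤ j ≤ m_t}. -/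
/-- Partial sums `M_t = m_1 + ⋯ + m_t` of a composition. -/
def psum (m : ℕ → ℕ) (t : ℕ) : ℕ := ∑ i ∈ Finset.Icc 1 t, m i

/-- Apply the transposition `(i j)` to both entries of a pair if this leaves the entries in increasing
order; otherwise leave the pair unchanged. -/
def swapPair (i j : ℕ) (p : ℕ × ℕ) : ℕ × ℕ :=
  if Equiv.swap i j p.1 < Equiv.swap i j p.2 then (Equiv.swap i j p.1, Equiv.swap i j p.2) else p

lemma swapPair_swapPair (i j : ℕ) {p : ℕ × ℕ} (hp : p.1 < p.2) :
    swapPair i j (swapPair i j p) = p := by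
  unfold swapPair
  split_ifs with h1 h2 <;> simp_all

lemma swapPair_lt (i j : ℕ) {p : ℕ × ℕ} (hp : p.1 < p.2) :
    (swapPair i j p).1 < (swapPair i j p).2 := by
  unfold swapPair
  split_ifs with h1 <;> simp_all

lemma swap_mem_Icc {n i j x : ℕ} (hi : i ∈ Finset.Icc 1 n) (hj : j ∈ Finset.Icc 1 n)
    (hx : x ∈ Finset.Icc 1 n) : Equiv.swap i j x ∈ Finset.Icc 1 n := by
  rw [Equiv.swap_apply_def]
  split_ifs <;> assumption

lemma swapPair_mem {n i j : ℕ} {p : ℕ × ℕ} (hi : i ∈ Finset.Icc 1 n) (hj : j ∈ Finset.Icc 1 n)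
    (hp : p ∈ Finset.Icc 1 n ×ˢ Finset.Icc 1 n) :
    swapPair i j p ∈ Finset.Icc 1 n ×ˢ Finset.Icc 1 n := by
  rw [Finset.mem_product] at hp
  unfold swapPair
  split_ifs
  · exact Finset.mem_product.2 ⟨swap_mem_Icc hi hj hp.1, swap_mem_Icc hi hj hp.2⟩
  · exact Finset.mem_product.2 hp

/-- The increasing pairs whose order is reversed by the transposition `(i j)`. -/
lemma not_swap_lt_swap {i j a b : ℕ} (hij : i < j) (hab : a < b)
    (h : ¬ Equiv.swap i j a < Equiv.swap i j b) :
    (a = i ∧ b = j) ∨ (a = i ∧ i < b ∧ b < j) ∨ (b = j ∧ i < a ∧ a < j) := by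
  rw [Equiv.swap_apply_def, Equiv.swap_apply_def] at h
  split_ifs at h <;> omega

lemma plen_le_mul_swap {n i j : ℕ} (w : Equiv.Perm ℕ) (hi : i ∈ Finset.Icc 1 n)
    (hj : j ∈ Finset.Icc 1 n) (hij : i < j) (hw : w i < w j) :
    plen n w ≤ plen n (w * Equiv.swap i j) := by
  unfold plen
  refine Finset.card_le_card_of_injOn (swapPair i j) ?_ ?_
  · rintro ⟨a, b⟩ h
    obtain ⟨hm, hab, hinv⟩ := Finset.mem_filter.1 h
    refine Finset.mem_filter.2 ⟨swapPair_mem hi hj hm, swapPair_lt i j hab, ?_⟩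
    dsimp only at hab hinv
    unfold swapPair
    split_ifs with hs
    · simpa using hinv
    · dsimp only at hs ⊢
      rcases not_swap_lt_swap hij hab hs with ⟨rfl, rfl⟩ | ⟨rfl, h1, h2⟩ | ⟨rfl, h1, h2⟩
      · omega
      · simp only [Equiv.Perm.mul_apply, Equiv.swap_apply_left,
          Equiv.swap_apply_of_ne_of_ne h1.ne' h2.ne]
        omega
      · simp only [Equiv.Perm.mul_apply, Equiv.swap_apply_right,
          Equiv.swap_apply_of_ne_of_ne h1.ne' h2.ne]
        omega
  · intro p hp q hq hpq
    rw [← swapPair_swapPair i j (Finset.mem_filter.1 hp).2.1, hpq,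
      swapPair_swapPair i j (Finset.mem_filter.1 hq).2.1]

lemma plen_mul_swap_add_one_s9 {n i j : ℕ} (w : Equiv.Perm ℕ) (hi : i ∈ Finset.Icc 1 n)
    (hj : j ∈ Finset.Icc 1 n) (hij : i < j) (hw : w j < w i)
    (hcov : ∀ x, i < x → x < j → w x < w j ∨ w i < w x) :
    plen n (w * Equiv.swap i j) + 1 = plen n w := by
  have hmem : (i, j) ∈ (Finset.Icc 1 n ×ˢ Finset.Icc 1 n).filter
      (fun p => p.1 < p.2 ∧ w p.2 < w p.1) :=
    Finset.mem_filter.2 ⟨Finset.mem_product.2 ⟨hi, hj⟩, hij, hw⟩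
  unfold plen
  rw [← Finset.card_erase_add_one hmem]
  congr 1
  refine Finset.card_nbij' (swapPair i j) (swapPair i j) ?_ ?_ ?_ ?_
  · rintro ⟨a, b⟩ h
    obtain ⟨hm, hab, hinv⟩ := Finset.mem_filter.1 h
    have hlt := swapPair_lt i j hab
    refine Finset.mem_erase.2 ⟨?_, Finset.mem_filter.2 ⟨swapPair_mem hi hj hm, hlt, ?_⟩⟩
    · -- The involution fixes `(i, j)`, which is not an inversion of `w * swap i j`.
      intro he
      have h2 := swapPair_swapPair i j hab
      rw [he] at h2
      have h3 : swapPair i j (i, j) = (i, j) := by simp [swapPair, hij.le]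
      rw [h3] at h2
      obtain ⟨rfl, rfl⟩ := Prod.mk.inj h2
      simp at hinv
      omega
    · dsimp only at hab hinv
      unfold swapPair
      split_ifs with hs
      · simpa using hinv
      · dsimp only at hs ⊢
        rcases not_swap_lt_swap hij hab hs with ⟨rfl, rfl⟩ | ⟨rfl, h1, h2⟩ | ⟨rfl, h1, h2⟩
        · exact hw
        · simp only [Equiv.Perm.mul_apply, Equiv.swap_apply_left,
            Equiv.swap_apply_of_ne_of_ne h1.ne' h2.ne] at hinv
          omega
        · simp only [Equiv.Perm.mul_apply, Equiv.swap_apply_right,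
            Equiv.swap_apply_of_ne_of_ne h1.ne' h2.ne] at hinv
          omega
  · rintro ⟨a, b⟩ h
    obtain ⟨hne, h⟩ := Finset.mem_erase.1 h
    obtain ⟨hm, hab, hinv⟩ := Finset.mem_filter.1 h
    refine Finset.mem_filter.2 ⟨swapPair_mem hi hj hm, swapPair_lt i j hab, ?_⟩
    dsimp only at hab hinv
    unfold swapPair
    split_ifs with hs
    · simpa using hinv
    · dsimp only at hs ⊢
      rcases not_swap_lt_swap hij hab hs with ⟨rfl, rfl⟩ | ⟨rfl, h1, h2⟩ | ⟨rfl, h1, h2⟩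
      · exact absurd rfl hne
      · simp only [Equiv.Perm.mul_apply, Equiv.swap_apply_left,
          Equiv.swap_apply_of_ne_of_ne h1.ne' h2.ne]
        have := hcov b h1 h2
        omega
      · simp only [Equiv.Perm.mul_apply, Equiv.swap_apply_right,
          Equiv.swap_apply_of_ne_of_ne h1.ne' h2.ne]
        have := hcov a h1 h2
        omega
  · intro p hp
    exact swapPair_swapPair i j (Finset.mem_filter.1 hp).2.1
  · intro p hp
    exact swapPair_swapPair i j (Finset.mem_filter.1 (Finset.mem_of_mem_erase hp)).2.1

lemma psum_succ (m : ℕ → ℕ) (t : ℕ) : psum m (t + 1) = psum m t + m (t + 1) := by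
  unfold psum
  rw [Finset.sum_Icc_succ_top (by omega)]

lemma psum_mono (m : ℕ → ℕ) : Monotone (psum m) :=
  monotone_nat_of_le_succ fun t => by rw [psum_succ]; omega

lemma exists_block (m : ℕ → ℕ) (k x : ℕ) (hx : 1 ≤ x) (hxk : x ≤ psum m k) :
    ∃ t, t + 1 ≤ k ∧ psum m t < x ∧ x ≤ psum m (t + 1) := by
  induction k with
  | zero => simp [psum] at hxk; omega
  | succ k ih =>
    by_cases h : x ≤ psum m k
    · obtain ⟨t, h1, h2⟩ := ih h
      exact ⟨t, by omega, h2⟩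
    · exact ⟨k, le_rfl, by omega, hxk⟩

/-- For the block-cycle permutation `w = [m_1,…,m_k]` of a composition
`(m_1,…,m_k)` of `n`, one has
`E_w = {(M_{t−1}+1, M_{t−1}+j) : 1 ≤ t ≤ k, 2 ≤ j ≤ m_t}`. -/
theorem Eset_block_cycle
    (n k : ℕ) (hn : 1 ≤ n) (hk : 1 ≤ k)
    (m : ℕ → ℕ) (hm : ∀ t, 1 ≤ t → t ≤ k → 1 ≤ m t)
    (hsum : psum m k = n)
    (w : Equiv.Perm ℕ)
    (hw0 : ∀ x, x ∉ Finset.Icc 1 n → w x = x)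
    (hw1 : ∀ t, 1 ≤ t → t ≤ k → w (psum m (t - 1) + 1) = psum m t)
    (hw2 : ∀ t, 1 ≤ t → t ≤ k → ∀ j, 2 ≤ j → j ≤ m t →
      w (psum m (t - 1) + j) = psum m (t - 1) + j - 1) :
    Eset n w = {p : ℕ × ℕ | ∃ t j, 1 ≤ t ∧ t ≤ k ∧ 2 ≤ j ∧ j ≤ m t ∧
      p = (psum m (t - 1) + 1, psum m (t - 1) + j)} := by
  -- Blocks are indexed by `t = s + 1`, which removes the truncated subtraction.
  have hfirst : ∀ s, s + 1 ≤ k → w (psum m s + 1) = psum m (s + 1) := fun s hs =>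
    hw1 (s + 1) (by omega) hs
  have hrest : ∀ s, s + 1 ≤ k → ∀ x, psum m s + 1 < x → x ≤ psum m (s + 1) → w x + 1 = x := by
    intro s hs x h1 h2
    rw [psum_succ] at h2
    have h := hw2 (s + 1) (by omega) hs (x - psum m s) (by omega) (by omega)
    simp only [Nat.add_sub_cancel] at h
    rw [show psum m s + (x - psum m s) = x by omega] at h
    omega
  have hblock : ∀ s, s + 1 ≤ k → ∀ x, psum m s < x → x ≤ psum m (s + 1) →
      psum m s < w x ∧ w x ≤ psum m (s + 1) := by
    intro s hs x h1 h2
    rcases (show x = psum m s + 1 ∨ psum m s + 1 < x by omega) with rfl | h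
    · rw [hfirst s hs]; omega
    · have := hrest s hs x h h2
      omega
  ext ⟨i, j⟩
  constructor
  · rintro ⟨h1, hij, hjn, hlen⟩
    dsimp only at h1 hij hjn hlen
    have hlt : w j < w i := by
      by_contra hcon
      have hne : w i ≠ w j := fun h => hij.ne (w.injective h)
      have := plen_le_mul_swap (n := n) w (Finset.mem_Icc.2 ⟨h1, by omega⟩)
        (Finset.mem_Icc.2 ⟨by omega, hjn⟩) hij (by omega)
      omega
    obtain ⟨s, hs, hs1, hs2⟩ := exists_block m k i h1 (by omega)
    obtain ⟨t, ht, ht1, ht2⟩ := exists_block m k j (by omega) (by omega)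
    have hbi := hblock s hs i hs1 hs2
    have hbj := hblock t ht j ht1 ht2
    obtain rfl : s = t := by
      rcases lt_trichotomy s t with h | h | h
      · have := psum_mono m (show s + 1 ≤ t from h)
        omega
      · exact h
      · have := psum_mono m (show t + 1 ≤ s from h)
        omega
    have hj' := hrest s hs j (by omega) ht2
    have hi : i = psum m s + 1 := by
      by_contra hne
      have := hrest s hs i (by omega) hs2
      omega
    have hp := psum_succ m s
    refine ⟨s + 1, j - psum m s, by omega, hs, by omega, by omega, ?_⟩
    simp only [Nat.add_sub_cancel, Prod.mk.injEq]
    omega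
  · rintro ⟨t, j', ht, htk, hj2, hjm, he⟩
    obtain ⟨s, rfl⟩ : ∃ s, t = s + 1 := ⟨t - 1, by omega⟩
    simp only [Nat.add_sub_cancel, Prod.mk.injEq] at he
    obtain ⟨rfl, hj⟩ := he
    have hp := psum_succ m s
    have hk' := psum_mono m htk
    have hwi := hfirst s htk
    have hwj := hrest s htk j (by omega) (by omega)
    refine ⟨by simp, by dsimp only; omega, by dsimp only; omega, ?_⟩
    dsimp only
    refine plen_mul_swap_add_one_s9 w (Finset.mem_Icc.2 ⟨by omega, by omega⟩)
      (Finset.mem_Icc.2 ⟨by omega, by omega⟩) (by omega) (by omega) fun x hx1 hx2 => Or.inl ?_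
    have := hrest s htk x hx1 (by omega)
    omega
end

section
/- Fix integers n ≥ 2 and r, s ≥ 1 with r + s = n, and a rational number q > 1. For 1 ≤ a, b ≤ n, the vector λ_{a,b} := e_a − q·e_b belongs to the L-minimal cone C_{L−Min} if and only if b ≤ r. -/
/-!
Put `m_j = r - x_{j-r}` and let the weight `w m i` be `1` for `i ≤ m` and `1/q` for `i > m`.
Then `Γ_x(λ) = ∑_{j > r} ∑_{i ≤ r} w m_j i * (y_i - y_j)` (`Gamma_eq_sum_weight`), and every
weight satisfies `1/q ≤ w m i ≤ 1`.

If `b ≤ r`, then for `j > r` the coordinate `y_j` of `e_a - q e_b` is nonnegative, while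
`∑_{i ≤ r} w m_j i * y_i` is at most `1 - q * (1/q) = 0`; so each summand in `j` is nonpositive.

If `b > r`, the sequence `x = 0` has all weights `1`, and
`Γ_0(λ) = s ∑_{i ≤ r} y_i - r ∑_{j > r} y_j` equals `s + r q` when `a ≤ r` and `r (q - 1)` when
`a > r`; both are positive.
-/

/-- `Γ_x(λ)` for a sequence `x` and `λ = (y_1,…,y_n)`:
`Σ_{j=r+1}^{n} ( Σ_{i=1}^{r−x_{j−r}} (y_i − y_j)
  + (1/q) Σ_{i=r−x_{j−r}+1}^{r} (y_i − y_j) )`. -/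
def Gamma (n r : ℕ) (q : ℚ) (x : ℕ → ℕ) (y : ℕ → ℚ) : ℚ :=
  ∑ j ∈ Finset.Icc (r + 1) n,
    ((∑ i ∈ Finset.Icc 1 (r - x (j - r)), (y i - y j)) +
      (1 / q) * ∑ i ∈ Finset.Icc (r - x (j - r) + 1) r, (y i - y j))

/-- The L-minimal cone `C_{L−Min}`: the set of `λ` with `Γ_x(λ) ≤ 0` for every
sequence `r ≥ x_1 ≥ ⋯ ≥ x_s ≥ 0`. -/
def CLMin (n r s : ℕ) (q : ℚ) : Set (ℕ → ℚ) :=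
  {y | ∀ x : ℕ → ℕ, x 1 ≤ r → (∀ i, 1 ≤ i → i < s → x (i + 1) ≤ x i) →
    Gamma n r q x y ≤ 0}

/-- The coefficient of `y_i - y_j` in `Γ_x`, where `m = r - x_{j-r}`. -/
def weight (q : ℚ) (m i : ℕ) : ℚ := if i ≤ m then 1 else 1 / q

lemma weight_le_one {q : ℚ} (hq : 1 < q) (m i : ℕ) : weight q m i ≤ 1 := by
  unfold weight
  split_ifs
  · exact le_rfl
  · rw [div_le_one (by linarith)]
    exact hq.le

lemma one_le_mul_weight {q : ℚ} (hq : 1 < q) (m i : ℕ) : 1 ≤ q * weight q m i := by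
  unfold weight
  split_ifs
  · linarith
  · rw [mul_one_div_cancel (by linarith)]

lemma weight_nonneg {q : ℚ} (hq : 1 < q) (m i : ℕ) : 0 ≤ weight q m i := by
  have hq0 : 0 < q := by linarith
  unfold weight
  split_ifs <;> positivity

lemma sum_weight (q : ℚ) (m r : ℕ) (hm : m ≤ r) (f : ℕ → ℚ) :
    (∑ i ∈ Finset.Icc 1 m, f i) + (1 / q) * ∑ i ∈ Finset.Icc (m + 1) r, f i =
      ∑ i ∈ Finset.Icc 1 r, weight q m i * f i := by
  have hU : Finset.Icc 1 r = Finset.Icc 1 m ∪ Finset.Icc (m + 1) r := by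
    ext i
    simp only [Finset.mem_union, Finset.mem_Icc]
    omega
  have hD : Disjoint (Finset.Icc 1 m) (Finset.Icc (m + 1) r) := by
    rw [Finset.disjoint_left]
    intro i
    simp only [Finset.mem_Icc]
    omega
  rw [hU, Finset.sum_union hD, Finset.mul_sum]
  congr 1
  · refine Finset.sum_congr rfl fun i hi => ?_
    rw [weight, if_pos (Finset.mem_Icc.1 hi).2, one_mul]
  · refine Finset.sum_congr rfl fun i hi => ?_
    rw [weight, if_neg (by have := (Finset.mem_Icc.1 hi).1; omega)]

lemma Gamma_eq_sum_weight (n r : ℕ) (q : ℚ) (x : ℕ → ℕ) (y : ℕ → ℚ) :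
    Gamma n r q x y = ∑ j ∈ Finset.Icc (r + 1) n, ∑ i ∈ Finset.Icc 1 r,
      weight q (r - x (j - r)) i * (y i - y j) :=
  Finset.sum_congr rfl fun _ _ => sum_weight q _ r (Nat.sub_le _ _) _

lemma Gamma_zero (r s : ℕ) (q : ℚ) (y : ℕ → ℚ) :
    Gamma (r + s) r q (fun _ => 0) y =
      s * ∑ i ∈ Finset.Icc 1 r, y i - r * ∑ j ∈ Finset.Icc (r + 1) (r + s), y j := by
  have hs : r + s + 1 - (r + 1) = s := by omega
  simp [Gamma, Finset.sum_sub_distrib, Finset.mul_sum, hs]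

/-- The vector `λ_{a,b} = e_a − q·e_b` belongs to `C_{L−Min}` if and only if
`b ≤ r`. -/
theorem lambda_ab_mem_CLMin_iff
    (n r s : ℕ) (hn : 2 ≤ n) (hr : 1 ≤ r) (hs : 1 ≤ s) (hrs : r + s = n)
    (q : ℚ) (hq : 1 < q)
    (a b : ℕ) (ha1 : 1 ≤ a) (ha2 : a ≤ n) (hb1 : 1 ≤ b) (hb2 : b ≤ n) :
    ((fun t : ℕ => (if t = a then (1 : ℚ) else 0) -
        q * (if t = b then (1 : ℚ) else 0)) ∈ CLMin n r s q) ↔ b ≤ r := by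
  subst hrs
  constructor
  · intro h
    by_contra hb
    have h0 := h (fun _ => 0) (Nat.zero_le _) (fun _ _ _ => le_rfl)
    rw [Gamma_zero] at h0
    have hr' : (1 : ℚ) ≤ r := by exact_mod_cast hr
    have hs' : (1 : ℚ) ≤ s := by exact_mod_cast hs
    have hbj : r + 1 ≤ b := by omega
    simp only [Finset.sum_sub_distrib, ← Finset.mul_sum, Finset.sum_ite_eq',
      Finset.mem_Icc] at h0
    by_cases ha : a ≤ r
    · have ha' : ¬ r + 1 ≤ a := by omega
      simp only [ha, ha', ha1, hb, hb2, hbj, and_true, and_false, true_and, false_and,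
        if_true, if_false] at h0
      nlinarith
    · have ha' : r + 1 ≤ a := by omega
      simp only [ha, ha', ha2, hb, hb2, hbj, and_true, and_false, true_and, false_and,
        if_true, if_false] at h0
      nlinarith
  · intro hb x _ _
    rw [Gamma_eq_sum_weight]
    refine Finset.sum_nonpos fun j hj => ?_
    have hjr := (Finset.mem_Icc.1 hj).1
    have hjb : j ≠ b := by omega
    generalize r - x (j - r) = m
    simp only [mul_sub, Finset.sum_sub_distrib, if_neg hjb, mul_zero, sub_zero]
    -- The `y_j` part is a sum of nonnegative terms, since `y_j` is `0` or `1`.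
    have h1 : 0 ≤ ∑ i ∈ Finset.Icc 1 r, weight q m i * (if j = a then (1 : ℚ) else 0) :=
      Finset.sum_nonneg fun i _ => mul_nonneg (weight_nonneg hq m i) (by split_ifs <;> norm_num)
    have h2 : ∑ i ∈ Finset.Icc 1 r, weight q m i * (if i = a then (1 : ℚ) else 0) ≤ 1 := by
      simp only [mul_ite, mul_one, mul_zero, Finset.sum_ite_eq']
      split_ifs
      · exact weight_le_one hq m a
      · norm_num
    have h3 : 1 ≤ ∑ i ∈ Finset.Icc 1 r, weight q m i * (q * (if i = b then (1 : ℚ) else 0)) := by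
      simp only [mul_ite, mul_one, mul_zero, Finset.sum_ite_eq',
        Finset.mem_Icc, hb1, hb, and_self, if_true]
      linarith [one_le_mul_weight hq m b]
    linarith
end

section
/- Fix integers n ≥ 2 and r, s ≥ 1 with r + s = n, and a rational number q > 1. For all integers d and i with 1 ≤ i ≤ d ≤ min(r, n−1), the vector e_{d−i+1} − q·e_{r+1−i} belongs to the L-minimal cone C_{L−Min}. (This is the weight of the partial Hasse invariant Ha_i^{(d)}.) -/
/-- For `1 ≤ i ≤ d ≤ min(r, n−1)`, the weight `e_{d−i+1} − q·e_{r+1−i}` of the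
partial Hasse invariant `Ha_i^{(d)}` belongs to `C_{L−Min}`. -/
theorem hasse_weight_mem_CLMin
    (n r s : ℕ) (hn : 2 ≤ n) (hr : 1 ≤ r) (hs : 1 ≤ s) (hrs : r + s = n)
    (q : ℚ) (hq : 1 < q)
    (d i : ℕ) (hi1 : 1 ≤ i) (hid : i ≤ d) (hdr : d ≤ r) (hdn : d ≤ n - 1) :
    (fun t : ℕ => (if t = d - i + 1 then (1 : ℚ) else 0) -
        q * (if t = r + 1 - i then (1 : ℚ) else 0)) ∈ CLMin n r s q := by
  intro x _ _
  unfold Gamma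
  apply Finset.sum_nonpos
  intro j hj
  rw [Finset.mem_Icc] at hj
  obtain ⟨a, ha⟩ : ∃ a, a = d - i + 1 := ⟨_, rfl⟩
  obtain ⟨b, hb⟩ : ∃ b, b = r + 1 - i := ⟨_, rfl⟩
  obtain ⟨m, hm⟩ : ∃ m, m = r - x (j - r) := ⟨_, rfl⟩
  rw [← ha, ← hb, ← hm]
  have hja : j ≠ a := by omega
  have hjb : j ≠ b := by omega
  have ha1 : 1 ≤ a := by omega
  have har : a ≤ r := by omega
  have hb1 : 1 ≤ b := by omega
  have hbr : b ≤ r := by omega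
  have hq0 : 0 < q := by linarith
  have hinv : 1 / q < 1 := (div_lt_one hq0).2 hq
  have hmul : 1 / q * q = 1 := by field_simp
  simp only [hja, hjb, if_false, mul_zero, sub_zero, Finset.sum_sub_distrib, ← Finset.mul_sum,
    Finset.sum_ite_eq', Finset.mem_Icc, ha1, har, hb1, hbr, true_and, and_true,
    Nat.succ_le_iff, ← not_le]
  -- The four cases are the positions of `a` and `b` relative to `m`.
  by_cases h1 : a ≤ m <;> by_cases h2 : b ≤ m <;>
    simp only [h1, h2, not_true, not_false_iff, if_true, if_false] <;>
    nlinarith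
end

section
/- Fix integers n ≥ 2 and r, s ≥ 1 with r + s = n, and a rational number q > 1. Let λ = (y_1,…,y_n) ∈ ℚ^n be L-dominant, i.e. y_1 ≥ ⋯ ≥ y_r and y_{r+1} ≥ ⋯ ≥ y_n. Then Γ_{O,S}(λ) ≤ 0 for every subset S ⊆ O if and only if λ belongs to the L-minimal cone C_{L−Min}, i.e. Γ_x(λ) ≤ 0 for every sequence x with r ≥ x_1 ≥ ⋯ ≥ x_s ≥ 0. (In the paper's notation: C_orb ∩ X*_{+,I}(T) = C_{L−Min} ∩ X*_{+,I}(T) for GL_n of signature (r,s).) -/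
/-!
Both `Γ_{O,S}(λ)` and `Γ_x(λ)` are sums over `(i,j) ∈ O` of `y_i − y_j` weighted by `1/q` or `1`,
the weight `1/q` being used on `S`, respectively on `S_x = {(i,j) : r − x_{j−r} < i}`
(`GammaOS_eq_sum`, `Gamma_eq_sum`). So each `Γ_x` is the `Γ_{O,S}` of `S = S_x`, which gives one
direction. Conversely, since `1/q < 1`, every `Γ_{O,S}(λ)` is at most the one for which `S` is the
set of pairs with `y_i < y_j`. For `L`-dominant `λ` this set is some `S_x`: as `y_1 ≥ ⋯ ≥ y_r`, the
`i` with `y_j ≤ y_i` form an initial segment of `{1,…,r}` (`le_card_filter_iff`), and as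
`y_{r+1} ≥ ⋯ ≥ y_n` these segments grow with `j`, so that `x` is decreasing.
-/

/-- `Γ_{O,S}(λ) = Σ_{(i,j)∈O∖S} (y_i − y_j) + (1/q) Σ_{(i,j)∈S} (y_i − y_j)`,
where `O = {(i,j) : 1 ≤ i ≤ r, r+1 ≤ j ≤ n}`. -/
def GammaOS (n r : ℕ) (q : ℚ) (S : Finset (ℕ × ℕ)) (y : ℕ → ℚ) : ℚ :=
  (∑ p ∈ (Finset.Icc 1 r ×ˢ Finset.Icc (r + 1) n) \ S, (y p.1 - y p.2)) +
    (1 / q) * ∑ p ∈ S, (y p.1 - y p.2)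

theorem GammaOS_eq_sum (n r : ℕ) (q : ℚ) (S : Finset (ℕ × ℕ)) (y : ℕ → ℚ)
    (hS : S ⊆ Finset.Icc 1 r ×ˢ Finset.Icc (r + 1) n) :
    GammaOS n r q S y = ∑ j ∈ Finset.Icc (r + 1) n, ∑ i ∈ Finset.Icc 1 r,
      (if (i, j) ∈ S then 1 / q else 1) * (y i - y j) := by
  rw [← Finset.sum_product_right'
    (f := fun i j => (if (i, j) ∈ S then 1 / q else 1) * (y i - y j)),
    ← Finset.sum_sdiff hS, GammaOS, Finset.mul_sum]
  congr 1
  · refine Finset.sum_congr rfl fun p hp => ?_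
    rw [if_neg (Finset.mem_sdiff.1 hp).2, one_mul]
  · refine Finset.sum_congr rfl fun p hp => ?_
    rw [if_pos hp]

theorem Gamma_eq_sum (n r : ℕ) (q : ℚ) (x : ℕ → ℕ) (y : ℕ → ℚ) :
    Gamma n r q x y = ∑ j ∈ Finset.Icc (r + 1) n, ∑ i ∈ Finset.Icc 1 r,
      (if r - x (j - r) < i then 1 / q else 1) * (y i - y j) := by
  refine Finset.sum_congr rfl fun j _ => ?_
  have hsub : Finset.Icc (r - x (j - r) + 1) r ⊆ Finset.Icc 1 r :=
    Finset.Icc_subset_Icc_left (by omega)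
  have hsdiff : Finset.Icc 1 r \ Finset.Icc (r - x (j - r) + 1) r
      = Finset.Icc 1 (r - x (j - r)) := by
    ext i
    simp only [Finset.mem_sdiff, Finset.mem_Icc]
    omega
  rw [← Finset.sum_sdiff hsub, hsdiff, Finset.mul_sum]
  congr 1
  · refine Finset.sum_congr rfl fun i hi => ?_
    rw [if_neg (by have := Finset.mem_Icc.1 hi; omega), one_mul]
  · refine Finset.sum_congr rfl fun i hi => ?_
    rw [if_pos (by have := Finset.mem_Icc.1 hi; omega)]

/-- For `y` decreasing on `{1,…,r}`, the superlevel set `{i : c ≤ y_i}` is the initial segment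
whose length is its cardinality. -/
theorem le_card_filter_iff (r : ℕ) (y : ℕ → ℚ) (c : ℚ)
    (hdom : ∀ i, 1 ≤ i → i ≤ r - 1 → y (i + 1) ≤ y i) (i : ℕ) (h1 : 1 ≤ i) (hir : i ≤ r) :
    i ≤ ((Finset.Icc 1 r).filter fun k => c ≤ y k).card ↔ c ≤ y i := by
  have anti : ∀ a, 1 ≤ a → ∀ b, a ≤ b → b ≤ r → y b ≤ y a := by
    intro a ha b hab
    induction b, hab using Nat.le_induction with
    | base => intro _; exact le_rfl
    | succ b hb ih =>
      intro hbr
      exact (hdom b (by omega) (by omega)).trans (ih (by omega))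
  constructor
  · intro hcard
    by_contra hlt
    have hsub : ((Finset.Icc 1 r).filter fun k => c ≤ y k) ⊆ Finset.Icc 1 (i - 1) := by
      intro k hk
      simp only [Finset.mem_filter, Finset.mem_Icc] at hk ⊢
      by_contra hki
      exact hlt (hk.2.trans (anti i h1 k (by omega) hk.1.2))
    have := Finset.card_le_card hsub
    rw [Nat.card_Icc] at this
    omega
  · intro hc
    have hsub : Finset.Icc 1 i ⊆ (Finset.Icc 1 r).filter fun k => c ≤ y k := by
      intro k hk
      simp only [Finset.mem_filter, Finset.mem_Icc] at hk ⊢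
      exact ⟨⟨hk.1, hk.2.trans hir⟩, hc.trans (anti k hk.1 i hk.2 hir)⟩
    simpa using Finset.card_le_card hsub

/-- For an L-dominant weight `λ`, one has `Γ_{O,S}(λ) ≤ 0` for every `S ⊆ O`
if and only if `λ ∈ C_{L−Min}`: that is,
`C_orb ∩ X*_{+,I}(T) = C_{L−Min} ∩ X*_{+,I}(T)` for `GL_n` of signature `(r,s)`. -/
theorem orbit_cone_eq_CLMin_on_dominant
    (n r s : ℕ) (hn : 2 ≤ n) (hr : 1 ≤ r) (hs : 1 ≤ s) (hrs : r + s = n)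
    (q : ℚ) (hq : 1 < q) (y : ℕ → ℚ)
    (hdom1 : ∀ i, 1 ≤ i → i ≤ r - 1 → y (i + 1) ≤ y i)
    (hdom2 : ∀ j, r + 1 ≤ j → j ≤ n - 1 → y (j + 1) ≤ y j) :
    (∀ S ⊆ Finset.Icc 1 r ×ˢ Finset.Icc (r + 1) n, GammaOS n r q S y ≤ 0) ↔
      y ∈ CLMin n r s q := by
  constructor
  · intro h x _ _
    have hS := Finset.filter_subset (fun p : ℕ × ℕ => r - x (p.2 - r) < p.1)
      (Finset.Icc 1 r ×ˢ Finset.Icc (r + 1) n)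
    refine le_of_eq_of_le ?_ (h _ hS)
    rw [Gamma_eq_sum, GammaOS_eq_sum _ _ _ _ _ hS]
    refine Finset.sum_congr rfl fun j hj => Finset.sum_congr rfl fun i hi => ?_
    simp only [Finset.mem_filter, Finset.mem_product, hi, hj, true_and]
  · intro h S hS
    let m : ℚ → ℕ := fun c => ((Finset.Icc 1 r).filter fun k => c ≤ y k).card
    have hm : ∀ c, m c ≤ r := fun c => by
      simpa using Finset.card_filter_le (Finset.Icc 1 r) fun k => c ≤ y k
    have hmono : ∀ c d, d ≤ c → m c ≤ m d := fun c d hcd =>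
      Finset.card_le_card (Finset.monotone_filter_right _ fun k _ hk => hcd.trans hk)
    -- `r - m (y j)` counts the `i` with `y i < y j`.
    have hx := h (fun k => r - m (y (k + r))) (Nat.sub_le _ _) fun i h1 his =>
      Nat.sub_le_sub_left (hmono _ _ (by
        have := hdom2 (i + r) (by omega) (by omega)
        rwa [show i + r + 1 = i + 1 + r by omega] at this)) r
    refine le_trans ?_ hx
    rw [Gamma_eq_sum, GammaOS_eq_sum _ _ _ _ _ hS]
    refine Finset.sum_le_sum fun j hj => Finset.sum_le_sum fun i hi => ?_
    rw [Finset.mem_Icc] at hi hj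
    have hq1 : 1 / q ≤ 1 := by
      rw [div_le_one (by linarith)]
      exact hq.le
    have hji : j - r + r = j := by omega
    have hiff : i ≤ m (y j) ↔ y j ≤ y i := le_card_filter_iff r y (y j) hdom1 i hi.1 hi.2
    have hmr := hm (y j)
    simp only [hji, Nat.sub_sub_self hmr]
    by_cases hc : y j ≤ y i
    · rw [if_neg (not_lt.2 (hiff.2 hc))]
      refine mul_le_mul_of_nonneg_right ?_ (sub_nonneg.2 hc)
      split_ifs
      exacts [hq1, le_rfl]
    · rw [if_pos (not_le.1 (mt hiff.1 hc))]
      refine mul_le_mul_of_nonpos_right ?_ (sub_nonpos.2 (not_le.1 hc).le)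
      split_ifs
      exacts [le_rfl, hq1]
end

section
/- Take n = 4 and (r,s) = (2,2), and fix a rational number q > 1. Let λ = (a_1,a_2,a_3,a_4) ∈ ℚ^4 with a_1 ≥ a_2 and a_3 ≥ a_4. Then Γ_x(λ) ≤ 0 holds for all six sequences x ∈ {(0,0),(1,0),(1,1),(2,0),(2,1),(2,2)} if and only if the following three inequalities hold: 2q·a_1 + 2a_2 − (q+1)a_3 − (q+1)a_4 ≤ 0, (q+1)a_1 + 2a_2 − 2a_3 − (q+1)a_4 ≤ 0, and (q+1)a_1 + (q+1)a_2 − 2a_3 − 2q·a_4 ≤ 0. -/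
/-- The sequence `(x_1, x_2) = (u, v)`, encoded as a function `ℕ → ℕ`. -/
def xvec (u v : ℕ) : ℕ → ℕ := fun i => if i = 1 then u else if i = 2 then v else 0

/-- The vector `(a_1, a_2, a_3, a_4) ∈ ℚ^4`, encoded as a function `ℕ → ℚ`. -/
def yvec (a1 a2 a3 a4 : ℚ) : ℕ → ℚ := fun t =>
  if t = 1 then a1 else if t = 2 then a2 else if t = 3 then a3 else
    if t = 4 then a4 else 0

/-- The product `q * Γ_x`, free of denominators: the column `j = 3` carries `x_1 = u`
and the column `j = 4` carries `x_2 = v`. -/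
theorem mul_Gamma_four_two (q : ℚ) (hq : q ≠ 0) (u v : ℕ) (y : ℕ → ℚ) :
    q * Gamma 4 2 q (xvec u v) y =
      (q * ∑ i ∈ Finset.Icc 1 (2 - u), (y i - y 3) +
        ∑ i ∈ Finset.Icc (2 - u + 1) 2, (y i - y 3)) +
      (q * ∑ i ∈ Finset.Icc 1 (2 - v), (y i - y 4) +
        ∑ i ∈ Finset.Icc (2 - v + 1) 2, (y i - y 4)) := by
  have h : Finset.Icc (2 + 1) 4 = {3, 4} := by decide
  simp only [Gamma, h, xvec]
  rw [Finset.sum_pair (by norm_num)]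
  norm_num
  field_simp

/-- For `GL_4` of signature `(2,2)`: for `λ = (a_1,a_2,a_3,a_4)` with
`a_1 ≥ a_2`, `a_3 ≥ a_4`, the six inequalities `Γ_x(λ) ≤ 0` hold iff three
explicit inequalities hold. -/
theorem GL4_signature22_CLMin_iff
    (q : ℚ) (hq : 1 < q) (a1 a2 a3 a4 : ℚ) (h12 : a2 ≤ a1) (h34 : a4 ≤ a3) :
    (Gamma 4 2 q (xvec 0 0) (yvec a1 a2 a3 a4) ≤ 0 ∧
     Gamma 4 2 q (xvec 1 0) (yvec a1 a2 a3 a4) ≤ 0 ∧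
     Gamma 4 2 q (xvec 1 1) (yvec a1 a2 a3 a4) ≤ 0 ∧
     Gamma 4 2 q (xvec 2 0) (yvec a1 a2 a3 a4) ≤ 0 ∧
     Gamma 4 2 q (xvec 2 1) (yvec a1 a2 a3 a4) ≤ 0 ∧
     Gamma 4 2 q (xvec 2 2) (yvec a1 a2 a3 a4) ≤ 0) ↔
    (2 * q * a1 + 2 * a2 - (q + 1) * a3 - (q + 1) * a4 ≤ 0 ∧
     (q + 1) * a1 + 2 * a2 - 2 * a3 - (q + 1) * a4 ≤ 0 ∧
     (q + 1) * a1 + (q + 1) * a2 - 2 * a3 - 2 * q * a4 ≤ 0) := by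
  have hq0 : 0 < q := by linarith
  have key (u v : ℕ) (c : ℚ)
      (h : q * Gamma 4 2 q (xvec u v) (yvec a1 a2 a3 a4) = c) :
      Gamma 4 2 q (xvec u v) (yvec a1 a2 a3 a4) ≤ 0 ↔ c ≤ 0 := by
    rw [← h]
    exact ⟨mul_nonpos_of_nonneg_of_nonpos hq0.le, fun h => nonpos_of_mul_nonpos_right h hq0⟩
  have e0 : Finset.Icc 1 2 = {1, 2} := by decide
  rw [key 0 0 (q * (2 * (a1 + a2 - a3 - a4))) (by
      rw [mul_Gamma_four_two q hq0.ne']; simp [e0, yvec]; ring),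
    key 1 0 (2 * q * a1 + (q + 1) * a2 - (q + 1) * a3 - 2 * q * a4) (by
      rw [mul_Gamma_four_two q hq0.ne']; simp [e0, yvec]; ring),
    key 1 1 (2 * q * a1 + 2 * a2 - (q + 1) * a3 - (q + 1) * a4) (by
      rw [mul_Gamma_four_two q hq0.ne']; simp [yvec]; ring),
    key 2 0 ((q + 1) * a1 + (q + 1) * a2 - 2 * a3 - 2 * q * a4) (by
      rw [mul_Gamma_four_two q hq0.ne']; simp [e0, yvec]; ring),
    key 2 1 ((q + 1) * a1 + 2 * a2 - 2 * a3 - (q + 1) * a4) (by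
      rw [mul_Gamma_four_two q hq0.ne']; simp [e0, yvec]; ring),
    key 2 2 (2 * (a1 + a2 - a3 - a4)) (by
      rw [mul_Gamma_four_two q hq0.ne']; simp [e0, yvec]; ring)]
  constructor
  · rintro ⟨-, -, h11, h20, h21, -⟩
    exact ⟨h11, h21, h20⟩
  · rintro ⟨h11, h21, h20⟩
    have hS : a1 + a2 - a3 - a4 ≤ 0 := by
      rcases le_total a4 a1 with h | h
      · nlinarith [mul_nonneg (sub_nonneg.2 hq.le) (sub_nonneg.2 h)]
      · linarith
    have hqS : (q - 1) * (a1 + a2 - a3 - a4) ≤ 0 :=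
      mul_nonpos_of_nonneg_of_nonpos (by linarith) hS
    exact ⟨mul_nonpos_of_nonneg_of_nonpos hq0.le (by linarith), by linarith,
      h11, h20, h21, by linarith⟩
end

section
/- Let n ≥ 2, let q > 1 be a rational number, and let a_1 ≥ a_2 ≥ ⋯ ≥ a_n be rational numbers. Then the following are equivalent: (1) for every subset S ⊆ {1,…,n}, Σ_{i∉S} a_i + (1/q) Σ_{i∈S} a_i ≤ 0; (2) for every 1 ≤ k ≤ n−1, Σ_{i=1}^{k} a_i + (1/q) Σ_{i=k+1}^{n} a_i ≤ 0. (This is the description of C_{O_1} ∩ X*_{+,I}(T) for the symplectic group Sp(2n) with λ = (a_1,…,a_n) dominant for the Siegel Levi.) -/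
/-!
Each `Γ_S` is a sum over `i` of either `a i` or `q⁻¹ * a i`, so it is largest when the factor
`q⁻¹ < 1` is put exactly on the indices with `a i ≤ 0`. For decreasing `a` these indices form a
final segment `{k + 1, …, n}`, so the maximal `Γ_S` is a threshold sum (`gamma_le_threshold`).
The two degenerate thresholds cost nothing: if all `a i ≤ 0`, every `Γ_S` is trivially
nonpositive, and if all `a i > 0`, the inequality for `k = 1` already fails.
-/

/-- If the sign of `a` changes from nonnegative to nonpositive after index `k`, the threshold sum
at `k` dominates every `Γ_S`, by comparing the two sums term by term. -/
lemma gamma_le_threshold (n k : ℕ) (hk : k ≤ n) (r : ℚ) (hr : r ≤ 1) (a : ℕ → ℚ)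
    (hpos : ∀ i, 1 ≤ i → i ≤ k → 0 ≤ a i) (hneg : ∀ i, k + 1 ≤ i → i ≤ n → a i ≤ 0)
    (S : Finset ℕ) (hS : S ⊆ Finset.Icc 1 n) :
    (∑ i ∈ Finset.Icc 1 n \ S, a i) + r * ∑ i ∈ S, a i ≤
      (∑ i ∈ Finset.Icc 1 k, a i) + r * ∑ i ∈ Finset.Icc (k + 1) n, a i := by
  have key : ∀ T ⊆ Finset.Icc 1 n, (∑ i ∈ Finset.Icc 1 n \ T, a i) + r * ∑ i ∈ T, a i =
      ∑ i ∈ Finset.Icc 1 n, if i ∈ T then r * a i else a i := by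
    intro T hT
    rw [← Finset.sum_sdiff hT, Finset.mul_sum]
    congr 1
    · exact Finset.sum_congr rfl fun i hi => by simp [(Finset.mem_sdiff.mp hi).2]
    · exact Finset.sum_congr rfl fun i hi => by simp [hi]
  have hc : Finset.Icc 1 k = Finset.Icc 1 n \ Finset.Icc (k + 1) n := by
    ext i
    simp only [Finset.mem_sdiff, Finset.mem_Icc]
    omega
  rw [hc, key S hS, key _ (Finset.Icc_subset_Icc_left (by omega))]
  refine Finset.sum_le_sum fun i hi => ?_
  obtain ⟨h1, h2⟩ := Finset.mem_Icc.mp hi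
  by_cases hik : i ≤ k
  · have h := hpos i h1 hik
    have : i ∉ Finset.Icc (k + 1) n := by simp; omega
    rw [if_neg this]
    split_ifs <;> nlinarith
  · have h := hneg i (by omega) h2
    have : i ∈ Finset.Icc (k + 1) n := by simp; omega
    rw [if_pos this]
    split_ifs <;> nlinarith

/-- For `Sp(2n)` with `λ = (a_1,…,a_n)` dominant for the Siegel Levi
(`a_1 ≥ ⋯ ≥ a_n`): the inequalities `Γ_{O_1,S}(λ) ≤ 0` for all subsets
`S ⊆ {1,…,n}` are equivalent to the `n−1` threshold inequalities. -/
theorem Sp2n_orbit_cone_iff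
    (n : ℕ) (hn : 2 ≤ n) (q : ℚ) (hq : 1 < q) (a : ℕ → ℚ)
    (hdom : ∀ i, 1 ≤ i → i ≤ n - 1 → a (i + 1) ≤ a i) :
    (∀ S ⊆ Finset.Icc 1 n,
        (∑ i ∈ Finset.Icc 1 n \ S, a i) + (1 / q) * ∑ i ∈ S, a i ≤ 0) ↔
    (∀ k, 1 ≤ k → k ≤ n - 1 →
        (∑ i ∈ Finset.Icc 1 k, a i) +
          (1 / q) * ∑ i ∈ Finset.Icc (k + 1) n, a i ≤ 0) := by
  have hr0 : 0 < 1 / q := by positivity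
  have hr1 : 1 / q ≤ 1 := by rw [div_le_one (by linarith)]; exact hq.le
  have anti : ∀ i j, 1 ≤ i → i ≤ j → j ≤ n → a j ≤ a i := by
    intro i j hi hij
    induction j, hij using Nat.le_induction with
    | base => intro _; exact le_rfl
    | succ j hij ih =>
      intro hj
      exact (hdom j (by omega) (by omega)).trans (ih (by omega))
  constructor
  · intro h k hk1 hk2
    have hc : Finset.Icc 1 k = Finset.Icc 1 n \ Finset.Icc (k + 1) n := by
      ext i
      simp only [Finset.mem_sdiff, Finset.mem_Icc]
      omega
    rw [hc]
    exact h _ (Finset.Icc_subset_Icc_left (by omega))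
  · intro h S hS
    by_cases hn0 : a n ≤ 0
    · have hex : ∃ k, a (k + 1) ≤ 0 := ⟨n - 1, by rwa [Nat.sub_add_cancel (by omega)]⟩
      -- `k` is the number of positive entries among `a 1, …, a n`
      obtain ⟨k, hk, hmin⟩ : ∃ k, a (k + 1) ≤ 0 ∧ ∀ m < k, ¬ a (m + 1) ≤ 0 := by
        classical
        exact ⟨Nat.find hex, Nat.find_spec hex, fun m hm => Nat.find_min hex hm⟩
      have hkn : k ≤ n - 1 := by
        by_contra hlt
        refine hmin (n - 1) (by omega) ?_
        rwa [Nat.sub_add_cancel (by omega)]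
      have hneg : ∀ i, k + 1 ≤ i → i ≤ n → a i ≤ 0 := fun i h1 h2 =>
        (anti (k + 1) i (by omega) h1 h2).trans hk
      refine (gamma_le_threshold n k (by omega) (1 / q) hr1 a ?_ hneg S hS).trans ?_
      · intro i h1 h2
        have := hmin (i - 1) (by omega)
        rw [Nat.sub_add_cancel h1] at this
        exact (not_le.mp this).le
      · rcases Nat.eq_zero_or_pos k with rfl | hk0
        · have : ∑ i ∈ Finset.Icc (0 + 1) n, a i ≤ 0 :=
            Finset.sum_nonpos fun i hi =>
              hneg i (Finset.mem_Icc.mp hi).1 (Finset.mem_Icc.mp hi).2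
          simpa using mul_nonpos_of_nonneg_of_nonpos hr0.le this
        · exact h k hk0 hkn
    · exfalso
      have hp : ∀ i, 1 ≤ i → i ≤ n → 0 < a i := fun i h1 h2 =>
        (not_le.mp hn0).trans_le (anti i n h1 h2 le_rfl)
      have h1 := h 1 le_rfl (by omega)
      have h2 : 0 ≤ ∑ i ∈ Finset.Icc (1 + 1) n, a i :=
        Finset.sum_nonneg fun i hi => by
          obtain ⟨h3, h4⟩ := Finset.mem_Icc.mp hi
          exact (hp i (by omega) h4).le
      have h3 := mul_nonneg hr0.le h2
      have h4 := hp 1 le_rfl (by omega)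
      rw [Finset.Icc_self, Finset.sum_singleton] at h1
      linarith
end

section
/- Fix an integer n ≥ 2 and a rational number q > 1. Let m = (m_1,…,m_k) be a composition of n with Σ_{t=1}^{k} (m_t − 1) ≥ 2. Then for every pair (t,j) with 1 ≤ t ≤ k and 2 ≤ j ≤ m_t, there exist lower neighbours m′ and m″ of m such that C(m′) ∩ C(m″) ⊆ {x ∈ ℚ^n : F^m_{t,j}(x) ≤ 0}. -/
/-!
Every pair `(t, j)` names a position `c` of `{1, …, n}` that is not the first of its block, and a
lower neighbour of `m` arises by declaring one such position to be a new block start. Up to a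
positive factor, `F^m_{t,j}(x) ≤ 0` says that `x c` is at least the weighted mean of the values of
`x` at the block starts, the weights being `1, q, q², …` when the starts are read cyclically
beginning with the block after that of `c` (`Fform_split`).

As `∑ (m_t - 1) ≥ 2`, there is a second non-initial position `c'`. Take for `m₁` the splitting of
`m` at `c'` and for `m₂` the splitting of `m` at `c`. Membership in `C(m₁)` bounds `x c` below by a
mean involving `x c'`, and membership in `C(m₂)` bounds `x c'` below by a mean involving `x c`.
Eliminating `x c'` leaves a positive multiple of the wanted inequality, thanks to the identity
`(q - 1) (1 + q + ⋯ + q^k) + 1 = q^(k+1)` (`eliminate`). The computation has the same shape whether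
the two positions lie in one block (`same_block`) or in two (`two_blocks`), and it is symmetric
in `c` and `c'`.
-/

/-- Partial sum `M_t = m_1 + ⋯ + m_t` of a composition given as a list. -/
def Msum (m : List ℕ) (t : ℕ) : ℕ := (m.take t).sum

/-- The linear form `F^m_{t,j}` on `ℚ^n` (coordinates `x = z⁻¹λ`):
`F^m_{t,j}(x) = Σ_{d=1}^{t−1} q^{k−d}(x_{M_{t−d}+1} − x_c)
  + q^{k−t}(x_1 − x_c) + Σ_{d=t}^{k−1} q^{d−t}(x_{M_d+1} − x_c)`,
where `k` is the number of parts and `c = M_{t−1}+j`. -/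
def Fform (q : ℚ) (m : List ℕ) (t j : ℕ) (x : ℕ → ℚ) : ℚ :=
  (∑ d ∈ Finset.Icc 1 (t - 1),
      q ^ (m.length - d) * (x (Msum m (t - d) + 1) - x (Msum m (t - 1) + j))) +
    q ^ (m.length - t) * (x 1 - x (Msum m (t - 1) + j)) +
    ∑ d ∈ Finset.Icc t (m.length - 1),
      q ^ (d - t) * (x (Msum m d + 1) - x (Msum m (t - 1) + j))

/-- The cone cut out by all inequalities `F^m_{t,j}(x) ≤ 0`, i.e. the saturated
Hasse cone `⟨C_{Hasse,w}⟩` of the block-cycle permutation `w = [m_1,…,m_k]`. -/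
def Ccone (q : ℚ) (m : List ℕ) : Set (ℕ → ℚ) :=
  {x | ∀ t j, 1 ≤ t → t ≤ m.length → 2 ≤ j → j ≤ m.getD (t - 1) 0 →
    Fform q m t j x ≤ 0}

/-- `m'` is a lower neighbour of the composition `m` if it is obtained from `m`
by replacing a single entry by two consecutive positive entries with the same
sum. -/
def LowerNeighbour (m m' : List ℕ) : Prop :=
  ∃ l r : List ℕ, ∃ a b : ℕ, 1 ≤ a ∧ 1 ≤ b ∧
    m = l ++ (a + b) :: r ∧ m' = l ++ a :: b :: r

/-- The sum `∑ q^i * x (s_i)` over the block starts `s_0, s_1, …` of the blocks with sizes `l`,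
laid out from position `o + 1` on. -/
def startSum (q : ℚ) (x : ℕ → ℚ) : List ℕ → ℕ → ℚ
  | [], _ => 0
  | a :: r, o => x (o + 1) + q * startSum q x r (o + a)

lemma startSum_append (q : ℚ) (x : ℕ → ℚ) (l r : List ℕ) (o : ℕ) :
    startSum q x (l ++ r) o =
      startSum q x l o + q ^ l.length * startSum q x r (o + l.sum) := by
  induction l generalizing o with
  | nil => simp [startSum]
  | cons a l ih =>
    simp only [List.cons_append, startSum, ih, List.length_cons, List.sum_cons, ← add_assoc]
    ring

lemma startSum_eq_sum (q : ℚ) (x : ℕ → ℚ) (l : List ℕ) (o : ℕ) :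
    startSum q x l o =
      ∑ i ∈ Finset.range l.length, q ^ i * x (o + (l.take i).sum + 1) := by
  induction l generalizing o with
  | nil => simp [startSum]
  | cons a l ih =>
    rw [List.length_cons, Finset.sum_range_succ', startSum, ih, Finset.mul_sum, add_comm]
    simp only [List.take_succ_cons, List.sum_cons, List.take_zero, List.sum_nil, pow_zero,
      one_mul, add_zero, ← add_assoc]
    congr 1
    refine Finset.sum_congr rfl fun i _ => ?_
    ring

lemma Msum_left (l : List ℕ) (b : ℕ) (r : List ℕ) {i : ℕ} (hi : i ≤ l.length) :
    Msum (l ++ b :: r) i = (l.take i).sum := by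
  rw [Msum, List.take_append_of_le_length hi]

lemma Msum_right (l : List ℕ) (b : ℕ) (r : List ℕ) (i : ℕ) :
    Msum (l ++ b :: r) (l.length + 1 + i) = l.sum + b + (r.take i).sum := by
  rw [Msum, add_assoc, List.take_length_add_append, add_comm 1 i, List.take_succ_cons,
    List.sum_append, List.sum_cons, add_assoc]

/-- The form `F^m_{t,j}` for `m = l ++ b :: r` at the block `b`: the starts of the blocks in `r`
come first in the cyclic order, then those in `l`, and last the start of `b` itself. -/
lemma Fform_split (q : ℚ) (hq : 1 < q) (x : ℕ → ℚ) (l : List ℕ) (b : ℕ) (r : List ℕ) (j : ℕ) :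
    Fform q (l ++ b :: r) (l.length + 1) j x =
      startSum q x r (l.sum + b) +
        q ^ r.length * (startSum q x l 0 + q ^ l.length * x (l.sum + 1)) -
      (q ^ (l.length + 1 + r.length) - 1) / (q - 1) * x (l.sum + j) := by
  have hc : Msum (l ++ b :: r) (l.length + 1 - 1) = l.sum := by
    rw [Nat.add_sub_cancel, Msum_left l b r le_rfl, List.take_length]
  have hk : (l ++ b :: r).length = l.length + 1 + r.length := by
    simp [add_comm, add_left_comm]
  unfold Fform
  rw [hc, hk]
  set X := x (l.sum + j)
  have h1 : ∑ d ∈ Finset.Icc 1 (l.length + 1 - 1), q ^ (l.length + 1 + r.length - d) *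
        (x (Msum (l ++ b :: r) (l.length + 1 - d) + 1) - X) +
      q ^ (l.length + 1 + r.length - (l.length + 1)) * (x 1 - X) =
      ∑ i ∈ Finset.range (l.length + 1),
        q ^ (r.length + i) * (x ((l.take i).sum + 1) - X) := by
    rw [Finset.sum_range_succ']
    congr 1
    · refine Finset.sum_bij' (fun d _ => l.length - d) (fun i _ => l.length - i) ?_ ?_ ?_ ?_ ?_
      · intro d hd; simp only [Finset.mem_Icc, Finset.mem_range] at *; omega
      · intro d hd; simp only [Finset.mem_Icc, Finset.mem_range] at *; omega
      · intro d hd; simp only [Finset.mem_Icc] at *; omega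
      · intro d hd; simp only [Finset.mem_range] at *; omega
      · intro d hd
        simp only [Finset.mem_Icc] at hd
        rw [Msum_left l b r (by omega),
          show l.length + 1 - d = l.length - d + 1 by omega,
          show l.length + 1 + r.length - d = r.length + (l.length - d + 1) by omega]
    · simp
  have h3 : ∑ d ∈ Finset.Icc (l.length + 1) (l.length + 1 + r.length - 1),
        q ^ (d - (l.length + 1)) * (x (Msum (l ++ b :: r) d + 1) - X) =
      ∑ i ∈ Finset.range r.length,
        q ^ i * (x (l.sum + b + (r.take i).sum + 1) - X) := by
    refine Finset.sum_bij' (fun d _ => d - (l.length + 1)) (fun i _ => l.length + 1 + i)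
      ?_ ?_ ?_ ?_ ?_
    · intro d hd; simp only [Finset.mem_Icc, Finset.mem_range] at *; omega
    · intro d hd; simp only [Finset.mem_Icc, Finset.mem_range] at *; omega
    · intro d hd; simp only [Finset.mem_Icc] at *; omega
    · intro d hd; simp only [Finset.mem_range] at *; omega
    · intro d hd
      simp only [Finset.mem_Icc] at hd
      rw [← Msum_right, show l.length + 1 + (d - (l.length + 1)) = d by omega]
  rw [h1, h3]
  have hl' : ∑ i ∈ Finset.range (l.length + 1), q ^ i * x ((l.take i).sum + 1) =
      startSum q x l 0 + q ^ l.length * x (l.sum + 1) := by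
    rw [startSum_eq_sum, Finset.sum_range_succ, List.take_length]
    simp
  rw [← hl', startSum_eq_sum]
  have hq' : q - 1 ≠ 0 := by linarith
  have g1 := geom_sum_eq hq.ne' (l.length + 1)
  have g2 := geom_sum_eq hq.ne' r.length
  simp only [mul_sub, Finset.sum_sub_distrib, pow_add q r.length, mul_assoc, Finset.mul_sum]
  simp only [← Finset.mul_sum, ← Finset.sum_mul, g1, g2]
  field_simp
  ring

/-- Elimination of `c'` from the two lower bounds. Here `U` and `V` are the start sums of the two
arcs into which `c` and `c'` cut the cyclic sequence of `k` block starts, `u` and `v` are the powers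
of `q` given by the lengths of these arcs (so `u * v = q ^ k`), and `N = 1 + q + ⋯ + q ^ k`. -/
lemma eliminate {q u v U V c c' N N' : ℚ} (hq : 1 < q) (hu : 0 < u) (huv : 1 ≤ u * v)
    (hN : N = (q * (u * v) - 1) / (q - 1)) (hN' : N' = (u * v - 1) / (q - 1))
    (h1 : U + u * c' + u * q * V - N * c ≤ 0)
    (h2 : V + v * c + v * q * U - N * c' ≤ 0) :
    U + u * V - N' * c ≤ 0 := by
  have hq' : 0 < q - 1 := by linarith
  have e : (q - 1) * N = q * (u * v) - 1 := by rw [hN]; field_simp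
  have e' : (q - 1) * N' = u * v - 1 := by rw [hN']; field_simp
  have hNpos : 0 < N := by rw [hN]; exact div_pos (by nlinarith) hq'
  have eN : N' = N - u * v := by
    apply mul_left_cancel₀ hq'.ne'
    linear_combination e' - e
  have key : (q * N + 1) * (U + u * V - N' * c) =
      N * (U + u * c' + u * q * V - N * c) + u * (V + v * c + v * q * U - N * c') := by
    rw [eN]
    linear_combination (U - N * c) * e
  have hpos : 0 < q * N + 1 := by positivity
  have hle : (q * N + 1) * (U + u * V - N' * c) ≤ 0 := by
    rw [key]
    have := mul_nonneg hNpos.le (neg_nonneg.2 h1)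
    have := mul_nonneg hu.le (neg_nonneg.2 h2)
    linarith
  by_contra! h
  exact absurd (mul_pos hpos h) (not_lt.2 hle)

lemma mem_Ccone_split {q : ℚ} {x : ℕ → ℚ} (l : List ℕ) (b : ℕ) (r : List ℕ) {m : List ℕ}
    (hx : x ∈ Ccone q m) (hm : m = l ++ b :: r) {j : ℕ} (h2 : 2 ≤ j) (hj : j ≤ b) :
    Fform q (l ++ b :: r) (l.length + 1) j x ≤ 0 := by
  subst hm
  exact hx _ _ (by omega) (by simp) h2 (by simpa using hj)

/-- Elimination in either direction for positions `e + 1 < a + 1` of one block, of size `b`: the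
cones are those of the splittings at `a + 1` and at `e + 1`. -/
lemma same_block {q : ℚ} (hq : 1 < q) {x : ℕ → ℚ} (l r : List ℕ) {e f a b' b : ℕ}
    (he : 1 ≤ e) (hea : e < a) (hb' : 1 ≤ b') (hb : b = a + b') (hbf : b = e + f)
    (hx1 : x ∈ Ccone q (l ++ a :: b' :: r)) (hx2 : x ∈ Ccone q (l ++ e :: f :: r)) :
    Fform q (l ++ b :: r) (l.length + 1) (e + 1) x ≤ 0 ∧
      Fform q (l ++ b :: r) (l.length + 1) (a + 1) x ≤ 0 := by
  have h1 := mem_Ccone_split l a (b' :: r) hx1 rfl (j := e + 1) (by omega) (by omega)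
  have h2 := mem_Ccone_split (l ++ [e]) f r hx2 (by simp) (j := a - e + 1) (by omega) (by omega)
  have p1 : l.sum + e + (a - e + 1) = l.sum + (a + 1) := by omega
  have p2 : l.sum + a + b' = l.sum + b := by omega
  have p3 : l.sum + e + f = l.sum + b := by omega
  rw [Fform_split q hq] at h1 h2 ⊢
  rw [Fform_split q hq]
  simp only [startSum_append, startSum, List.length_append, List.length_cons, List.length_nil,
    List.sum_append, List.sum_cons, List.sum_nil, add_zero, zero_add, mul_zero, p1, p2, p3,
    ← add_assoc] at h1 h2 ⊢
  have hk : (1 : ℚ) ≤ q ^ (l.length + 1 + r.length) := one_le_pow₀ hq.le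
  have hk0 : (0 : ℚ) < q ^ (l.length + 1 + r.length) := by linarith
  constructor
  · have := eliminate (q := q) (u := 1) (v := q ^ (l.length + 1 + r.length)) (U := 0)
      (V := startSum q x r (l.sum + b) +
        q ^ r.length * (startSum q x l 0 + q ^ l.length * x (l.sum + 1)))
      (c := x (l.sum + e + 1)) (c' := x (l.sum + a + 1)) hq one_pos (by linarith) rfl rfl
      (le_of_eq_of_le (by ring) h1) (le_of_eq_of_le (by ring) h2)
    exact le_of_eq_of_le (by ring) this
  · have := eliminate (q := q) (v := 1) (u := q ^ (l.length + 1 + r.length)) (V := 0)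
      (U := startSum q x r (l.sum + b) +
        q ^ r.length * (startSum q x l 0 + q ^ l.length * x (l.sum + 1)))
      (c' := x (l.sum + e + 1)) (c := x (l.sum + a + 1)) hq hk0 (by linarith) rfl rfl
      (le_of_eq_of_le (by ring) h2) (le_of_eq_of_le (by ring) h1)
    exact le_of_eq_of_le (by ring) this

/-- Elimination in either direction for position `e + 1` of one block and position `e' + 1` of a
later block: the cones are those of the splittings at the later and at the earlier position. -/
lemma two_blocks {q : ℚ} (hq : 1 < q) {x : ℕ → ℚ} (l s r : List ℕ) {e f e' f' : ℕ}
    (he : 1 ≤ e) (hf : 1 ≤ f) (he' : 1 ≤ e') (hf' : 1 ≤ f')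
    (hx1 : x ∈ Ccone q (l ++ (e + f) :: s ++ e' :: f' :: r))
    (hx2 : x ∈ Ccone q (l ++ e :: f :: (s ++ (e' + f') :: r))) :
    Fform q (l ++ (e + f) :: (s ++ (e' + f') :: r)) (l.length + 1) (e + 1) x ≤ 0 ∧
      Fform q ((l ++ (e + f) :: s) ++ (e' + f') :: r) ((l ++ (e + f) :: s).length + 1)
        (e' + 1) x ≤ 0 := by
  have h1 := mem_Ccone_split l (e + f) (s ++ e' :: f' :: r) hx1 (by simp) (j := e + 1)
    (by omega) (by omega)
  have h2 := mem_Ccone_split (l ++ e :: f :: s) (e' + f') r hx2 (by simp) (j := e' + 1)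
    (by omega) (by omega)
  rw [Fform_split q hq] at h1 h2 ⊢
  rw [Fform_split q hq]
  simp only [startSum_append, startSum, List.length_append, List.length_cons,
    List.sum_append, List.sum_cons, zero_add, ← add_assoc] at h1 h2 ⊢
  set c := x (l.sum + e + 1)
  set c' := x (l.sum + e + f + s.sum + e' + 1)
  set A := startSum q x l 0 + q ^ l.length * x (l.sum + 1) with hA
  set B := startSum q x s (l.sum + e + f) + q ^ s.length * x (l.sum + e + f + s.sum + 1) with hB
  set R := startSum q x r (l.sum + e + f + s.sum + e' + f')
  have hu : (1 : ℚ) ≤ q ^ (s.length + 1) := one_le_pow₀ hq.le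
  have hv : (1 : ℚ) ≤ q ^ (l.length + 1 + r.length) := one_le_pow₀ hq.le
  have huv := one_le_mul_of_one_le_of_one_le hu hv
  have hvu := one_le_mul_of_one_le_of_one_le hv hu
  have h1' := eliminate (q := q) (u := q ^ (s.length + 1)) (v := q ^ (l.length + 1 + r.length))
    (U := B) (V := R + q ^ r.length * A) (c := c) (c' := c') hq (by linarith) huv rfl rfl
    (le_of_eq_of_le (by rw [hA, hB]; ring) h1) (le_of_eq_of_le (by rw [hA, hB]; ring) h2)
  have h2' := eliminate (q := q) (v := q ^ (s.length + 1)) (u := q ^ (l.length + 1 + r.length))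
    (V := B) (U := R + q ^ r.length * A) (c' := c) (c := c') hq (by linarith) hvu rfl rfl
    (le_of_eq_of_le (by rw [hA, hB]; ring) h2) (le_of_eq_of_le (by rw [hA, hB]; ring) h1)
  exact ⟨le_of_eq_of_le (by rw [hA, hB]; ring) h1', le_of_eq_of_le (by rw [hA, hB]; ring) h2'⟩

lemma exists_two_le {l : List ℕ} (h : (l.map (fun a => a - 1)).sum ≠ 0) : ∃ a ∈ l, 2 ≤ a := by
  by_contra! h'
  apply h
  rw [List.sum_eq_zero_iff]
  intro y hy
  obtain ⟨a, ha, rfl⟩ := List.mem_map.1 hy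
  have := h' a ha
  omega

/-- For a composition `m` of `n` with `Σ (m_t − 1) ≥ 2` and each pair `(t,j)`,
there are lower neighbours `m₁`, `m₂` of `m` with
`C(m₁) ∩ C(m₂) ⊆ {x : F^m_{t,j}(x) ≤ 0}`. -/
theorem exists_lower_neighbours_intersection_cone
    (n : ℕ) (hn : 2 ≤ n) (q : ℚ) (hq : 1 < q)
    (m : List ℕ) (hm : ∀ a ∈ m, 1 ≤ a) (hsum : m.sum = n)
    (hlen : 2 ≤ (m.map (fun a => a - 1)).sum)
    (t j : ℕ) (ht1 : 1 ≤ t) (ht2 : t ≤ m.length)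
    (hj1 : 2 ≤ j) (hj2 : j ≤ m.getD (t - 1) 0) :
    ∃ m₁ m₂ : List ℕ, LowerNeighbour m m₁ ∧ LowerNeighbour m m₂ ∧
      ∀ x : ℕ → ℚ, x ∈ Ccone q m₁ → x ∈ Ccone q m₂ → Fform q m t j x ≤ 0 := by
  obtain ⟨l, b, r, rfl, rfl⟩ : ∃ l b r, m = l ++ b :: r ∧ t = l.length + 1 := by
    refine ⟨m.take (t - 1), m[t - 1], m.drop t, ?_, ?_⟩
    · have h := List.drop_eq_getElem_cons (l := m) (i := t - 1) (by omega)
      rw [show t - 1 + 1 = t by omega] at h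
      rw [← h, List.take_append_drop]
    · rw [List.length_take]; omega
  have hjb : j ≤ b := by simpa using hj2
  obtain ⟨e, rfl⟩ : ∃ e, j = e + 1 := ⟨j - 1, by omega⟩
  obtain ⟨f, rfl⟩ : ∃ f, b = e + f := ⟨b - e, by omega⟩
  by_cases hb : 3 ≤ e + f
  · -- The block is long enough to contain a second non-initial position, before or after.
    by_cases hf : 2 ≤ f
    · refine ⟨l ++ (e + 1) :: (f - 1) :: r, l ++ e :: f :: r,
        ⟨l, r, e + 1, f - 1, by omega, by omega, ?_, rfl⟩,
        ⟨l, r, e, f, by omega, by omega, rfl, rfl⟩, fun x hx1 hx2 => ?_⟩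
      · rw [show e + 1 + (f - 1) = e + f by omega]
      · exact (same_block hq l r (by omega) (by omega) (by omega) (by omega) rfl hx1 hx2).1
    · refine ⟨l ++ e :: f :: r, l ++ 1 :: (e + f - 1) :: r,
        ⟨l, r, e, f, by omega, by omega, rfl, rfl⟩,
        ⟨l, r, 1, e + f - 1, by omega, by omega, ?_, rfl⟩, fun x hx1 hx2 => ?_⟩
      · rw [show 1 + (e + f - 1) = e + f by omega]
      · exact (same_block hq l r (by omega) (by omega) (by omega) rfl (by omega) hx1 hx2).2
  · -- The block has size two, so the second non-initial position lies in another block.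
    simp only [List.map_append, List.map_cons, List.sum_append, List.sum_cons] at hlen
    by_cases hr : (r.map (fun a => a - 1)).sum = 0
    · obtain ⟨a, ha, ha2⟩ := exists_two_le (l := l) (by omega)
      obtain ⟨l₁, l₂, rfl⟩ := List.append_of_mem ha
      obtain ⟨a', rfl⟩ : ∃ a', a = 1 + a' := ⟨a - 1, by omega⟩
      refine ⟨l₁ ++ (1 + a') :: l₂ ++ e :: f :: r, l₁ ++ 1 :: a' :: (l₂ ++ (e + f) :: r),
        ⟨_, r, e, f, by omega, by omega, rfl, rfl⟩,
        ⟨l₁, _, 1, a', by omega, by omega, by simp, rfl⟩, fun x hx1 hx2 => ?_⟩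
      exact (two_blocks hq l₁ l₂ r (by omega) (by omega) (by omega) (by omega) hx1 hx2).2
    · obtain ⟨a, ha, ha2⟩ := exists_two_le hr
      obtain ⟨s, r₂, rfl⟩ := List.append_of_mem ha
      obtain ⟨a', rfl⟩ : ∃ a', a = 1 + a' := ⟨a - 1, by omega⟩
      refine ⟨l ++ (e + f) :: s ++ 1 :: a' :: r₂, l ++ e :: f :: (s ++ (1 + a') :: r₂),
        ⟨_, r₂, 1, a', by omega, by omega, by simp, rfl⟩,
        ⟨l, _, e, f, by omega, by omega, rfl, rfl⟩, fun x hx1 hx2 => ?_⟩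
      exact (two_blocks hq l s r₂ (by omega) (by omega) (by omega) (by omega) hx1 hx2).1
end
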